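/- arXiv:2507.22138 — 2 statements merged into one kernel-verified Lean document; each statement's English description precedes it below -/
import Mathlib

section
/- Let u₁, …, u_m be nonzero vectors in ℝⁿ (m ≥ 1). The elementary star transform of order 1, defined on smooth compactly supported functions f : ℝⁿ → ℝ by S f = Σ_{i=1}^m 𝒳_{u_i} f, is injective (i.e. for every smooth compactly supported f, if S f vanishes identically then f = 0) if and only if the dual symbol is not identically zero, i.e. there exists ξ ∈ ℝⁿ such that e_{m-1}(⟨u₁, ξ⟩, …, ⟨u_m, ξ⟩) = Σ_{j=1}^m Π_{i ≠ j} ⟨u_i, ξ⟩ ≠ 0. -/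
open MeasureTheory
open scoped RealInnerProductSpace

/-- The divergent beam transform `𝒳_u f` on `ℝⁿ`:
`(𝒳_u f)(x) = ∫_{-∞}^0 f(x + t • u) dt`. -/
noncomputable def beam {n : ℕ} (u : EuclideanSpace ℝ (Fin n))
    (f : EuclideanSpace ℝ (Fin n) → ℝ) (x : EuclideanSpace ℝ (Fin n)) : ℝ :=
  ∫ t in Set.Iio (0 : ℝ), f (x + t • u)

open scoped Pointwise
open scoped LineDeriv SchwartzMap FourierTransform

namespace StarAux

/-- Complex-valued beam transform. -/
noncomputable def cbeam {n : ℕ} (u : EuclideanSpace ℝ (Fin n))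
    (f : EuclideanSpace ℝ (Fin n) → ℂ) (x : EuclideanSpace ℝ (Fin n)) : ℂ :=
  ∫ t in Set.Iio (0 : ℝ), f (x + t • u)

/-- Iterated directional derivative along a list of directions. -/
noncomputable def D {n m : ℕ} (u : Fin m → EuclideanSpace ℝ (Fin n)) (l : List (Fin m))
    (F : 𝓢(EuclideanSpace ℝ (Fin n), ℂ)) : 𝓢(EuclideanSpace ℝ (Fin n), ℂ) :=
  l.foldr (fun i G => ∂_{u i} G) F

variable {n m : ℕ}

lemma closedEmb {u : EuclideanSpace ℝ (Fin n)} (hu : u ≠ 0) (x : EuclideanSpace ℝ (Fin n)) :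
    Topology.IsClosedEmbedding (fun t : ℝ => x + t • u) :=
  (Homeomorph.addLeft x).isClosedEmbedding.comp (isClosedEmbedding_smul_left hu)

lemma cs_deriv (F : 𝓢(EuclideanSpace ℝ (Fin n), ℂ)) (hF : HasCompactSupport F)
    (v : EuclideanSpace ℝ (Fin n)) : HasCompactSupport (∂_{v} F : 𝓢(EuclideanSpace ℝ (Fin n), ℂ)) :=
  hF.fderiv_apply ℝ v

lemma cs_D (u : Fin m → EuclideanSpace ℝ (Fin n)) (l : List (Fin m))
    (F : 𝓢(EuclideanSpace ℝ (Fin n), ℂ)) (hF : HasCompactSupport F) :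
    HasCompactSupport (D u l F) := by
  induction l with
  | nil => exact hF
  | cons a l ih => exact cs_deriv _ ih _

lemma integrable_line (F : 𝓢(EuclideanSpace ℝ (Fin n), ℂ)) (hF : HasCompactSupport F)
    {u : EuclideanSpace ℝ (Fin n)} (hu : u ≠ 0) (x : EuclideanSpace ℝ (Fin n)) :
    Integrable (fun t : ℝ => F (x + t • u)) := by
  refine Continuous.integrable_of_hasCompactSupport ?_ (hF.comp_isClosedEmbedding (closedEmb hu x))
  exact F.continuous.comp (by fun_prop)

lemma hasDerivAt_line (F : 𝓢(EuclideanSpace ℝ (Fin n), ℂ)) (x v : EuclideanSpace ℝ (Fin n)) (t : ℝ) :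
    HasDerivAt (fun s : ℝ => F (x + s • v)) ((∂_{v} F : 𝓢(EuclideanSpace ℝ (Fin n), ℂ)) (x + t • v)) t := by
  have h1 : HasDerivAt (fun s : ℝ => x + s • v) v t := by
    simpa using ((hasDerivAt_id t).smul_const v).const_add x
  exact (F.differentiableAt (x := x + t • v)).hasFDerivAt.comp_hasDerivAt t h1

lemma cbeam_deriv_self (F : 𝓢(EuclideanSpace ℝ (Fin n), ℂ)) (hF : HasCompactSupport F)
    {u : EuclideanSpace ℝ (Fin n)} (hu : u ≠ 0) (x : EuclideanSpace ℝ (Fin n)) :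
    cbeam u (∂_{u} F : 𝓢(EuclideanSpace ℝ (Fin n), ℂ)) x = F x := by
  have h := HasCompactSupport.integral_Iic_deriv_eq (f := fun t : ℝ => F (x + t • u))
    ((F.smooth 1).comp (by fun_prop)) (hF.comp_isClosedEmbedding (closedEmb hu x)) 0
  unfold cbeam
  rw [← MeasureTheory.integral_Iic_eq_integral_Iio]
  simpa [(hasDerivAt_line F x u _).deriv] using h

lemma cbeam_hasDerivAt (F : 𝓢(EuclideanSpace ℝ (Fin n), ℂ)) (hF : HasCompactSupport F)
    {u : EuclideanSpace ℝ (Fin n)} (hu : u ≠ 0) (x v : EuclideanSpace ℝ (Fin n)) :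
    HasDerivAt (fun s : ℝ => cbeam u F (x + s • v))
      (cbeam u (∂_{v} F : 𝓢(EuclideanSpace ℝ (Fin n), ℂ)) x) 0 := by
  set G : 𝓢(EuclideanSpace ℝ (Fin n), ℂ) := ∂_{v} F with hG
  have hGc : HasCompactSupport G := cs_deriv F hF v
  obtain ⟨C, hC⟩ := hGc.exists_bound_of_continuous G.continuous
  set K : Set (EuclideanSpace ℝ (Fin n)) :=
    tsupport G + (fun s : ℝ => -(x + s • v)) '' Set.Icc (-1) 1
  have hK : IsCompact K :=
    IsCompact.add hGc (isCompact_Icc.image (by fun_prop))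
  set A : Set ℝ := (fun t : ℝ => t • u) ⁻¹' K
  have hA : IsCompact A := (isClosedEmbedding_smul_left hu).isCompact_preimage hK
  have key := hasDerivAt_integral_of_dominated_loc_of_deriv_le
    (μ := (volume : Measure ℝ).restrict (Set.Iio 0)) (x₀ := (0 : ℝ)) (s := Metric.ball 0 1)
    (F := fun s t => F (x + s • v + t • u)) (F' := fun s t => G (x + s • v + t • u))
    (bound := A.indicator (fun _ => C)) (Metric.ball_mem_nhds _ one_pos)
    ?_ ?_ ?_ ?_ ?_ ?_
  · simpa [cbeam] using key.2
  · refine Filter.Eventually.of_forall fun s => ?_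
    exact (F.continuous.comp (by fun_prop)).aestronglyMeasurable
  · exact (integrable_line F hF hu _).integrableOn
  · exact (G.continuous.comp (by fun_prop)).aestronglyMeasurable
  · refine Filter.Eventually.of_forall fun t s hs => ?_
    by_cases ht : t ∈ A
    · rw [Set.indicator_of_mem ht]; exact hC _
    · rw [Set.indicator_of_notMem ht]
      have : G (x + s • v + t • u) = 0 := by
        by_contra hne
        apply ht
        refine ⟨x + s • v + t • u, subset_tsupport _ hne, -(x + s • v), ⟨s, ?_, rfl⟩, ?_⟩
        · rw [Metric.mem_ball, dist_zero_right, Real.norm_eq_abs, abs_lt] at hs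
          exact ⟨hs.1.le, hs.2.le⟩
        · simp only []
          abel
      rw [this, norm_zero]
  · apply Integrable.integrableOn
    rw [integrable_indicator_iff hA.measurableSet]
    exact integrableOn_const hA.measure_lt_top.ne
  · refine Filter.Eventually.of_forall fun t s hs => ?_
    have := hasDerivAt_line F (x + t • u) v s
    simpa only [add_right_comm] using this

lemma star_D (u : Fin m → EuclideanSpace ℝ (Fin n)) (hu : ∀ i, u i ≠ 0) (l : List (Fin m))
    (F : 𝓢(EuclideanSpace ℝ (Fin n), ℂ)) (hF : HasCompactSupport F)
    (h : ∀ x, ∑ i, cbeam (u i) F x = 0) : ∀ x, ∑ i, cbeam (u i) (D u l F) x = 0 := by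
  induction l with
  | nil => exact h
  | cons a l ih =>
    intro x
    have h1 : HasDerivAt (fun s : ℝ => ∑ i, cbeam (u i) (D u l F) (x + s • u a))
        (∑ i, cbeam (u i) (D u (a :: l) F) x) 0 :=
      HasDerivAt.fun_sum fun i _ => cbeam_hasDerivAt _ (cs_D u l F hF) (hu i) x (u a)
    simp only [ih] at h1
    exact h1.unique (hasDerivAt_const _ _)

lemma D_inj (u : Fin m → EuclideanSpace ℝ (Fin n)) (hu : ∀ i, u i ≠ 0) (l : List (Fin m))
    (F : 𝓢(EuclideanSpace ℝ (Fin n), ℂ)) (hF : HasCompactSupport F)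
    (h : D u l F = 0) : F = 0 := by
  induction l with
  | nil => exact h
  | cons a l ih =>
    apply ih
    ext x
    rw [← cbeam_deriv_self _ (cs_D u l F hF) (hu a) x]
    have h' : (∂_{u a} (D u l F) : 𝓢(EuclideanSpace ℝ (Fin n), ℂ)) = 0 := h
    rw [h']
    simp [cbeam]

lemma fourier_D (u : Fin m → EuclideanSpace ℝ (Fin n)) (l : List (Fin m))
    (F : 𝓢(EuclideanSpace ℝ (Fin n), ℂ)) (ξ : EuclideanSpace ℝ (Fin n)) :
    (𝓕 (D u l F) : 𝓢(EuclideanSpace ℝ (Fin n), ℂ)) ξ =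
      (l.map fun i => (2 * Real.pi * Complex.I) * ((⟪u i, ξ⟫ : ℝ) : ℂ)).prod *
        (𝓕 F : 𝓢(EuclideanSpace ℝ (Fin n), ℂ)) ξ := by
  induction l with
  | nil => simp [D]
  | cons a l ih =>
    have h' : D u (a :: l) F = ∂_{u a} (D u l F) := rfl
    have ht : (inner ℝ · (u a) : EuclideanSpace ℝ (Fin n) → ℝ).HasTemperateGrowth := by fun_prop
    rw [h', SchwartzMap.fourier_lineDerivOp_eq, smul_apply,
      SchwartzMap.smulLeftCLM_apply_apply ht, ih, real_inner_comm]
    simp only [List.map_cons, List.prod_cons, Complex.real_smul, smul_eq_mul]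
    ring

lemma fourier_inj {F G : 𝓢(EuclideanSpace ℝ (Fin n), ℂ)}
    (h : ∀ ξ, (𝓕 F : 𝓢(EuclideanSpace ℝ (Fin n), ℂ)) ξ =
      (𝓕 G : 𝓢(EuclideanSpace ℝ (Fin n), ℂ)) ξ) : F = G := by
  have h' : (𝓕 F : 𝓢(EuclideanSpace ℝ (Fin n), ℂ)) = 𝓕 G := by ext ξ; exact h ξ
  exact (FourierTransform.fourierEquiv ℂ 𝓢(EuclideanSpace ℝ (Fin n), ℂ)).injective h'

/-- The dual differential operator. -/
noncomputable def Q (u : Fin m → EuclideanSpace ℝ (Fin n))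
    (F : 𝓢(EuclideanSpace ℝ (Fin n), ℂ)) : 𝓢(EuclideanSpace ℝ (Fin n), ℂ) :=
  ∑ j, D u (Finset.univ.erase j).toList F

lemma star_D_univ (u : Fin m → EuclideanSpace ℝ (Fin n)) (hu : ∀ i, u i ≠ 0)
    (F : 𝓢(EuclideanSpace ℝ (Fin n), ℂ)) (hF : HasCompactSupport F)
    (x : EuclideanSpace ℝ (Fin n)) :
    ∑ i, cbeam (u i) (D u Finset.univ.toList F) x = Q u F x := by
  rw [Q, sum_apply]
  refine Finset.sum_congr rfl fun j _ => ?_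
  have h : D u Finset.univ.toList F = ∂_{u j} (D u (Finset.univ.erase j).toList F) := by
    change _ = D u (j :: (Finset.univ.erase j).toList) F
    apply fourier_inj
    intro ξ
    rw [fourier_D, fourier_D, List.map_cons, List.prod_cons, Finset.prod_map_toList,
      Finset.prod_map_toList, Finset.mul_prod_erase Finset.univ
        (fun i => (2 * Real.pi * Complex.I) * ((⟪u i, ξ⟫ : ℝ) : ℂ)) (Finset.mem_univ j)]
  rw [h, cbeam_deriv_self _ (cs_D u _ F hF) (hu j)]

lemma fourier_Q (u : Fin m → EuclideanSpace ℝ (Fin n))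
    (F : 𝓢(EuclideanSpace ℝ (Fin n), ℂ)) (ξ : EuclideanSpace ℝ (Fin n)) :
    (𝓕 (Q u F) : 𝓢(EuclideanSpace ℝ (Fin n), ℂ)) ξ =
      (2 * Real.pi * Complex.I) ^ (m - 1) *
        ((∑ j, ∏ i ∈ Finset.univ.erase j, ⟪u i, ξ⟫ : ℝ) : ℂ) *
        (𝓕 F : 𝓢(EuclideanSpace ℝ (Fin n), ℂ)) ξ := by
  have h : (𝓕 (Q u F) : 𝓢(EuclideanSpace ℝ (Fin n), ℂ)) =
      ∑ j, 𝓕 (D u (Finset.univ.erase j).toList F) :=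
    map_sum (FourierTransform.fourierEquiv ℂ 𝓢(EuclideanSpace ℝ (Fin n), ℂ)) _ _
  rw [h, sum_apply]
  simp only [fourier_D, Finset.prod_map_toList, Finset.prod_mul_distrib, Finset.prod_const]
  rw [← Finset.sum_mul]
  push_cast
  rw [Finset.mul_sum]
  congr 1
  refine Finset.sum_congr rfl fun j _ => ?_
  rw [Finset.card_erase_of_mem (Finset.mem_univ j), Finset.card_univ, Fintype.card_fin,
    mul_pow, mul_pow]

end StarAux

open StarAux

theorem star_injective_iff_dualSymbol_ne_zero {n m : ℕ} (hm : 1 ≤ m)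
    (u : Fin m → EuclideanSpace ℝ (Fin n)) (hu : ∀ i, u i ≠ 0) :
    (∀ f : EuclideanSpace ℝ (Fin n) → ℝ, ContDiff ℝ (⊤ : ℕ∞) f →
        HasCompactSupport f → (∀ x, ∑ i, beam (u i) f x = 0) → f = 0) ↔
      ∃ ξ : EuclideanSpace ℝ (Fin n),
        ∑ j, ∏ i ∈ Finset.univ.erase j, ⟪u i, ξ⟫ ≠ 0 := by
  constructor
  · intro hinj
    by_contra! hP
    let b : ContDiffBump (0 : EuclideanSpace ℝ (Fin n)) := ⟨1, 2, one_pos, one_lt_two⟩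
    have hbc : HasCompactSupport (fun x => ((b x : ℝ) : ℂ)) :=
      b.hasCompactSupport.comp_left (g := ((↑) : ℝ → ℂ)) Complex.ofReal_zero
    let F : 𝓢(EuclideanSpace ℝ (Fin n), ℂ) :=
      hbc.toSchwartzMap (Complex.ofRealCLM.contDiff.comp b.contDiff)
    have hFc : HasCompactSupport F := hbc
    set G := D u Finset.univ.toList F with hG
    have hGc : HasCompactSupport G := cs_D _ _ _ hFc
    have hQ : Q u F = 0 := by
      apply fourier_inj
      intro ξ
      have h0 : (𝓕 (0 : 𝓢(EuclideanSpace ℝ (Fin n), ℂ)) : 𝓢(EuclideanSpace ℝ (Fin n), ℂ)) = 0 :=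
        map_zero (FourierTransform.fourierEquiv ℂ 𝓢(EuclideanSpace ℝ (Fin n), ℂ))
      rw [fourier_Q, hP ξ, h0]
      simp
    have hS : ∀ x, ∑ i, cbeam (u i) G x = 0 := by
      intro x
      rw [hG, star_D_univ u hu F hFc, hQ]
      rfl
    have part : ∀ L : ℂ →L[ℝ] ℝ, (fun x => L (G x)) = 0 := by
      intro L
      refine hinj _ (L.contDiff.comp (G.smooth ⊤)) (hGc.comp_left (map_zero L)) fun x => ?_
      have h1 : ∀ i, beam (u i) (fun x => L (G x)) x = L (cbeam (u i) G x) := fun i =>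
        L.integral_comp_comm (integrable_line G hGc (hu i) x).integrableOn
      simp only [h1]
      rw [← map_sum, hS, map_zero]
    have hG0 : G = 0 := by
      ext x
      exact Complex.ext (congrFun (part Complex.reCLM) x) (congrFun (part Complex.imCLM) x)
    have hF0 : F = 0 := D_inj u hu _ F hFc hG0
    have h1 : F 0 = 1 := by
      change ((b 0 : ℝ) : ℂ) = 1
      rw [b.one_of_mem_closedBall (by simp [b])]
      simp
    rw [hF0] at h1
    simp at h1
  · rintro ⟨ξ₀, hξ₀⟩ f hf hfc hS
    have hbc : HasCompactSupport (fun x => ((f x : ℝ) : ℂ)) :=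
      hfc.comp_left (g := ((↑) : ℝ → ℂ)) Complex.ofReal_zero
    let F : 𝓢(EuclideanSpace ℝ (Fin n), ℂ) :=
      hbc.toSchwartzMap (Complex.ofRealCLM.contDiff.comp hf)
    have hFc : HasCompactSupport F := hbc
    have hSF : ∀ x, ∑ i, cbeam (u i) F x = 0 := by
      intro x
      have h1 : ∀ i, cbeam (u i) F x = ((beam (u i) f x : ℝ) : ℂ) := fun i => integral_ofReal
      simp only [h1]
      rw [← Complex.ofReal_sum, hS, Complex.ofReal_zero]
    have hQ : Q u F = 0 := by
      ext x
      rw [← star_D_univ u hu F hFc, star_D u hu _ F hFc hSF]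
      rfl
    have h0 : (𝓕 (0 : 𝓢(EuclideanSpace ℝ (Fin n), ℂ)) : 𝓢(EuclideanSpace ℝ (Fin n), ℂ)) = 0 :=
      map_zero (FourierTransform.fourierEquiv ℂ 𝓢(EuclideanSpace ℝ (Fin n), ℂ))
    set P : EuclideanSpace ℝ (Fin n) → ℝ :=
      fun ξ => ∑ j, ∏ i ∈ Finset.univ.erase j, ⟪u i, ξ⟫ with hPdef
    have hPa : AnalyticOnNhd ℝ P Set.univ := by
      intro x _
      refine Finset.analyticAt_fun_sum _ fun j _ => Finset.analyticAt_fun_prod _ fun i _ => ?_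
      exact (innerSL ℝ (u i)).analyticAt x
    have hdense : Dense {ξ | P ξ ≠ 0} := by
      intro x
      rw [mem_closure_iff_frequently]
      intro hx
      have hx' : P =ᶠ[nhds x] 0 := hx.mono fun y hy => not_not.mp hy
      exact hξ₀ (hPa.eqOn_zero_of_preconnected_of_eventuallyEq_zero isPreconnected_univ
        (Set.mem_univ x) hx' (Set.mem_univ ξ₀))
    have hfour : ((𝓕 F : 𝓢(EuclideanSpace ℝ (Fin n), ℂ)) : EuclideanSpace ℝ (Fin n) → ℂ) =
        fun _ => 0 := by
      refine Continuous.ext_on hdense (SchwartzMap.continuous _) continuous_const fun ξ hξ => ?_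
      have h := fourier_Q u F ξ
      rw [hQ, h0] at h
      have h2 := (mul_eq_zero.mp h.symm).resolve_left
      refine h2 (mul_ne_zero (pow_ne_zero _ Complex.two_pi_I_ne_zero) ?_)
      exact Complex.ofReal_ne_zero.mpr hξ
    have hF0 : F = 0 := by
      apply fourier_inj
      intro ξ
      rw [h0, hfour]
      rfl
    funext x
    have : F x = 0 := by rw [hF0]; rfl
    exact Complex.ofReal_eq_zero.mp this
end

section
/- Let φ = (1 + √5)/2 be the golden ratio, and let v₁, …, v₁₂ ∈ ℝ³ be the twelve vertices of a regular icosahedron centered at the origin: (0, ±1, ±φ), (±1, ±φ, 0), (±φ, 0, ±1). Then there exists a nonzero constant C ∈ ℝ such that for every ξ = (ξ₁, ξ₂, ξ₃) ∈ ℝ³, the fourth elementary symmetric polynomial of the twelve dot products satisfies e₄(⟨v₁, ξ⟩, …, ⟨v₁₂, ξ⟩) = C · (ξ₁² + ξ₂² + ξ₃²)². In particular, the differential operator e₄(𝒟_{v₁}, …, 𝒟_{v₁₂}) is a nonzero constant multiple of the square of the Laplacian on ℝ³. -/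
/-- The golden ratio `φ = (1 + √5)/2`. -/
noncomputable def goldenRatio' : ℝ := (1 + Real.sqrt 5) / 2

/-- The twelve vertices `(0, ±1, ±φ), (±1, ±φ, 0), (±φ, 0, ±1)` of a regular
icosahedron centered at the origin. -/
noncomputable def icoVerts : Fin 12 → Fin 3 → ℝ :=
  ![![0, 1, goldenRatio'], ![0, 1, -goldenRatio'],
    ![0, -1, goldenRatio'], ![0, -1, -goldenRatio'],
    ![1, goldenRatio', 0], ![1, -goldenRatio', 0],
    ![-1, goldenRatio', 0], ![-1, -goldenRatio', 0],
    ![goldenRatio', 0, 1], ![goldenRatio', 0, -1],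
    ![-goldenRatio', 0, 1], ![-goldenRatio', 0, -1]]

theorem esum_insert {ι : Type*} [DecidableEq ι] (f : ι → ℝ) (a : ι) (s : Finset ι) (ha : a ∉ s)
    (k : ℕ) : ∑ S ∈ (insert a s).powersetCard (k+1), ∏ i ∈ S, f i
      = ∑ S ∈ s.powersetCard (k+1), ∏ i ∈ S, f i + f a * ∑ S ∈ s.powersetCard k, ∏ i ∈ S, f i := by
  have hn : ∀ m, ∀ S ∈ s.powersetCard m, a ∉ S := fun m S hS h =>
    ha ((Finset.mem_powersetCard.1 hS).1 h)
  rw [Finset.powersetCard_succ_insert ha, Finset.sum_union, Finset.sum_image, Finset.mul_sum]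
  · congr 1
    exact Finset.sum_congr rfl fun S hS => Finset.prod_insert (hn k S hS)
  · intro S hS T hT h
    have := congrArg (fun U => Finset.erase U a) h
    simpa [Finset.erase_insert (hn k S hS), Finset.erase_insert (hn k T hT)] using this
  · rw [Finset.disjoint_left]
    intro S hS hS'
    obtain ⟨T, hT, rfl⟩ := Finset.mem_image.1 hS'
    exact hn _ _ hS (Finset.mem_insert_self a T)

theorem newton_four {ι : Type*} [DecidableEq ι] (f : ι → ℝ) (s : Finset ι) :
    (∑ S ∈ s.powersetCard 1, ∏ i ∈ S, f i = ∑ i ∈ s, f i) ∧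
    (2 * ∑ S ∈ s.powersetCard 2, ∏ i ∈ S, f i = (∑ i ∈ s, f i)^2 - ∑ i ∈ s, f i ^ 2) ∧
    (6 * ∑ S ∈ s.powersetCard 3, ∏ i ∈ S, f i = (∑ i ∈ s, f i)^3
      - 3 * (∑ i ∈ s, f i) * (∑ i ∈ s, f i ^ 2) + 2 * ∑ i ∈ s, f i ^ 3) ∧
    (24 * ∑ S ∈ s.powersetCard 4, ∏ i ∈ S, f i = (∑ i ∈ s, f i)^4
      - 6 * (∑ i ∈ s, f i)^2 * (∑ i ∈ s, f i ^ 2) + 3 * (∑ i ∈ s, f i ^ 2)^2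
      + 8 * (∑ i ∈ s, f i) * (∑ i ∈ s, f i ^ 3) - 6 * ∑ i ∈ s, f i ^ 4) := by
  induction s using Finset.induction_on with
  | empty =>
    have h : ∀ k, (∅ : Finset ι).powersetCard (k + 1) = ∅ := fun k =>
      Finset.powersetCard_eq_empty.2 (by simp)
    simp [h 0, h 1, h 2, h 3]
  | insert a s ha ih =>
    obtain ⟨h1, h2, h3, h4⟩ := ih
    rw [esum_insert f a s ha 0, esum_insert f a s ha 1, esum_insert f a s ha 2,
      esum_insert f a s ha 3]
    simp only [Finset.sum_insert ha, Finset.powersetCard_zero, Finset.sum_singleton,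
      Finset.prod_empty, zero_add, Nat.reduceAdd]
    refine ⟨?_, ?_, ?_, ?_⟩
    · linear_combination h1
    · linear_combination h2 + 2 * f a * h1
    · linear_combination h3 + 3 * f a * h2
    · linear_combination h4 + 4 * f a * h3

/-- for the twelve vertices of a regular icosahedron centered at the
origin, `e₄(⟨v₁,ξ⟩, …, ⟨v₁₂,ξ⟩) = C (ξ₁² + ξ₂² + ξ₃²)²` for some nonzero constant `C`. -/
theorem esymm_four_icosahedron :
    ∃ C : ℝ, C ≠ 0 ∧ ∀ ξ : Fin 3 → ℝ,
      ∑ S ∈ (Finset.univ : Finset (Fin 12)).powersetCard 4,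
        ∏ i ∈ S, (∑ j, icoVerts i j * ξ j)
        = C * (ξ 0 ^ 2 + ξ 1 ^ 2 + ξ 2 ^ 2) ^ 2 := by
  have hφ : goldenRatio' ^ 2 = goldenRatio' + 1 := by
    have := Real.sq_sqrt (show (0:ℝ) ≤ 5 by norm_num)
    unfold goldenRatio'
    linear_combination this / 4
  have hpos : 0 < goldenRatio' := by unfold goldenRatio'; positivity
  refine ⟨7 * (goldenRatio' + 1), by positivity, fun ξ => ?_⟩
  have h := (newton_four (fun i : Fin 12 => ∑ j, icoVerts i j * ξ j) Finset.univ).2.2.2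
  have hs : ∀ g : Fin 12 → ℝ, ∑ i, g i = g 0 + g 1 + g 2 + g 3 + g 4 + g 5 + g 6 + g 7 + g 8
      + g 9 + g 10 + g 11 := fun g => by simp [Fin.sum_univ_succ]; ring_nf
  generalize hX : ∑ S ∈ (Finset.univ : Finset (Fin 12)).powersetCard 4,
        ∏ i ∈ S, (∑ j, icoVerts i j * ξ j) = X at h ⊢
  have p1 : ∑ i, ∑ j, icoVerts i j * ξ j = 0 := by
    rw [hs]; simp [icoVerts, Fin.sum_univ_three]; ring
  have p2 : ∑ i, (∑ j, icoVerts i j * ξ j)^2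
      = 4 * (goldenRatio' + 2) * (ξ 0 ^ 2 + ξ 1 ^ 2 + ξ 2 ^ 2) := by
    rw [hs]; simp [icoVerts, Fin.sum_univ_three]
    linear_combination 4 * (ξ 0 ^ 2 + ξ 1 ^ 2 + ξ 2 ^ 2) * hφ
  have h4 : goldenRatio' ^ 4 = 3 * goldenRatio' + 2 := by
    linear_combination (goldenRatio' ^ 2 + goldenRatio' + 2) * hφ
  have p4 : ∑ i, (∑ j, icoVerts i j * ξ j)^4
      = 12 * (goldenRatio' + 1) * (ξ 0 ^ 2 + ξ 1 ^ 2 + ξ 2 ^ 2)^2 := by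
    rw [hs]; simp [icoVerts, Fin.sum_univ_three]
    linear_combination 4 * (ξ 0 ^ 4 + ξ 1 ^ 4 + ξ 2 ^ 4) * h4
      + 24 * (ξ 0 ^ 2 * ξ 1 ^ 2 + ξ 1 ^ 2 * ξ 2 ^ 2 + ξ 0 ^ 2 * ξ 2 ^ 2) * hφ
  rw [p1, p2, p4] at h
  linear_combination h / 24 + 2 * (ξ 0 ^ 2 + ξ 1 ^ 2 + ξ 2 ^ 2)^2 * hφ
end
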